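/- arXiv:1407.1258 — 2 statements merged into one kernel-verified Lean document; each statement's English description precedes it below -/
import Mathlib

section
/- Let C ≠ 0, a, b, c be real constants with c ≠ 0, and set f(u) = C·((u+b)² + c²)²·exp((4a/c)·arctan((u+b)/c)). Let u(t,x) be a smooth real-valued solution of the gKN equation with f, such that u_x(t,x) ≠ 0 for all (t,x). Then the function P(t,x) = ((u(t,x)+b)² + c²) + 3at·u_t(t,x) + ax·u_x(t,x) satisfies the symmetry determining equation ∂_t P − ∂_x³ P + 3(u_xx/u_x)∂_x² P − (3/2)(u_xx²/u_x²)∂_x P + (f(u)/u_x²)∂_x P − (f'(u)/u_x)P = 0 at every point (t,x). (This is the point symmetry X_{3e} = −3at∂_t − ax∂_x + ((u+b)²+c²)∂_u of the gKN equation.) -/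
open Real

/-- Partial derivative with respect to the second (spatial) variable. -/
noncomputable def pdx (u : ℝ → ℝ → ℝ) : ℝ → ℝ → ℝ := fun t x => deriv (fun y => u t y) x

/-- Partial derivative with respect to the first (time) variable. -/
noncomputable def pdt (u : ℝ → ℝ → ℝ) : ℝ → ℝ → ℝ := fun t x => deriv (fun s => u s x) t

/-- `u` solves the generalized Krichever-Novikov equation with nonlinearity `f`:
`u_t = u_xxx - (3/2) u_xx^2/u_x + f(u)/u_x`. -/
def isGKN (f : ℝ → ℝ) (u : ℝ → ℝ → ℝ) : Prop :=
  ∀ t x, pdt u t x =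
    pdx (pdx (pdx u)) t x - (3/2) * (pdx (pdx u) t x)^2 / pdx u t x + f (u t x) / pdx u t x

/-- The symmetry determining equation for a characteristic function `P` along `u`:
`∂_t P - ∂_x^3 P + 3 (u_xx/u_x) ∂_x^2 P - (3/2)(u_xx^2/u_x^2) ∂_x P + (f(u)/u_x^2) ∂_x P
 - (f'(u)/u_x) P = 0`. -/
def symmDet (f : ℝ → ℝ) (u P : ℝ → ℝ → ℝ) : Prop :=
  ∀ t x,
    pdt P t x - pdx (pdx (pdx P)) t x
      + 3 * (pdx (pdx u) t x / pdx u t x) * pdx (pdx P) t x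
      - (3/2) * ((pdx (pdx u) t x)^2 / (pdx u t x)^2) * pdx P t x
      + (f (u t x) / (pdx u t x)^2) * pdx P t x
      - (deriv f (u t x) / pdx u t x) * P t x = 0

/-! The determining equation says that `P` lies in the kernel of the linearization `L` of the
gKN equation about `u`. Differentiating the equation in `x` and in `t` gives `L u_x = 0` and
`L u_t = 0`; the Leibniz defects of `L` then give `L (3 t u_t + x u_x) = 4 f(u) / u_x`, while the
chain rule gives `L (φ(u)) = (2 φ'(u) f(u) - f'(u) φ(u)) / u_x - φ'''(u) u_x ^ 3`. Hence
`φ(u) + a (3 t u_t + x u_x)` is a characteristic as soon as `φ''' = 0` and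
`f' φ = (2 φ' + 4 a) f`. For `φ(v) = (v + b)² + c²`, integrating `f' / f = (2 φ' + 4 a) / φ`
produces exactly the stated `f`.
-/

open Function

section PartialDerivatives

variable {v w : ℝ → ℝ → ℝ} {m n : WithTop ℕ∞}

lemma hasDerivAt_fderiv_fst (hw : Differentiable ℝ (uncurry w)) (t x : ℝ) :
    HasDerivAt (fun s => w s x) (fderiv ℝ (uncurry w) (t, x) (1, 0)) t :=
  (hw (t, x)).hasFDerivAt.comp_hasDerivAt (f := fun s => (s, x)) t
    ((hasDerivAt_id t).prodMk (hasDerivAt_const t x))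

lemma hasDerivAt_fderiv_snd (hw : Differentiable ℝ (uncurry w)) (t x : ℝ) :
    HasDerivAt (fun y => w t y) (fderiv ℝ (uncurry w) (t, x) (0, 1)) x :=
  (hw (t, x)).hasFDerivAt.comp_hasDerivAt (f := fun y => (t, y)) x
    ((hasDerivAt_const x t).prodMk (hasDerivAt_id x))

lemma uncurry_pdt (hw : Differentiable ℝ (uncurry w)) :
    uncurry (pdt w) = fun p => fderiv ℝ (uncurry w) p (1, 0) :=
  funext fun p => (hasDerivAt_fderiv_fst hw p.1 p.2).deriv

lemma uncurry_pdx (hw : Differentiable ℝ (uncurry w)) :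
    uncurry (pdx w) = fun p => fderiv ℝ (uncurry w) p (0, 1) :=
  funext fun p => (hasDerivAt_fderiv_snd hw p.1 p.2).deriv

lemma hasDerivAt_pdt (hw : Differentiable ℝ (uncurry w)) (t x : ℝ) :
    HasDerivAt (fun s => w s x) (pdt w t x) t :=
  (hasDerivAt_fderiv_fst hw t x).differentiableAt.hasDerivAt

lemma hasDerivAt_pdx (hw : Differentiable ℝ (uncurry w)) (t x : ℝ) :
    HasDerivAt (fun y => w t y) (pdx w t x) x :=
  (hasDerivAt_fderiv_snd hw t x).differentiableAt.hasDerivAt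

lemma contDiff_pdt (hw : ContDiff ℝ n (uncurry w)) (hmn : m + 1 ≤ n) :
    ContDiff ℝ m (uncurry (pdt w)) := by
  rw [uncurry_pdt ((hw.of_le (le_add_self.trans hmn)).differentiable one_ne_zero)]
  exact (hw.fderiv_right hmn).clm_apply contDiff_const

lemma contDiff_pdx (hw : ContDiff ℝ n (uncurry w)) (hmn : m + 1 ≤ n) :
    ContDiff ℝ m (uncurry (pdx w)) := by
  rw [uncurry_pdx ((hw.of_le (le_add_self.trans hmn)).differentiable one_ne_zero)]
  exact (hw.fderiv_right hmn).clm_apply contDiff_const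

lemma pdt_pdx_comm (hw : ContDiff ℝ 2 (uncurry w)) : pdt (pdx w) = pdx (pdt w) := by
  funext t x
  have hw₁ : Differentiable ℝ (uncurry w) := hw.differentiable two_ne_zero
  have hw₂ : DifferentiableAt ℝ (fderiv ℝ (uncurry w)) (t, x) :=
    (hw.fderiv_right one_add_one_eq_two.le).differentiable one_ne_zero _
  have hsymm : IsSymmSndFDerivAt ℝ (uncurry w) (t, x) :=
    hw.contDiffAt.isSymmSndFDerivAt (by simp)
  have htx : pdt (pdx w) t x = fderiv ℝ (fderiv ℝ (uncurry w)) (t, x) (1, 0) (0, 1) := by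
    refine (hasDerivAt_fderiv_fst ((contDiff_pdx hw one_add_one_eq_two.le).differentiable
      one_ne_zero) t x).deriv.trans ?_
    rw [uncurry_pdx hw₁, fderiv_clm_apply hw₂ (by fun_prop)]
    simp
  have hxt : pdx (pdt w) t x = fderiv ℝ (fderiv ℝ (uncurry w)) (t, x) (0, 1) (1, 0) := by
    refine (hasDerivAt_fderiv_snd ((contDiff_pdt hw one_add_one_eq_two.le).differentiable
      one_ne_zero) t x).deriv.trans ?_
    rw [uncurry_pdt hw₁, fderiv_clm_apply hw₂ (by fun_prop)]
    simp
  rw [htx, hxt, hsymm.eq]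

lemma pdt_add (hv : Differentiable ℝ (uncurry v)) (hw : Differentiable ℝ (uncurry w)) :
    pdt (fun t x => v t x + w t x) = fun t x => pdt v t x + pdt w t x :=
  funext₂ fun t x => ((hasDerivAt_pdt hv t x).add (hasDerivAt_pdt hw t x)).deriv

lemma pdx_add (hv : Differentiable ℝ (uncurry v)) (hw : Differentiable ℝ (uncurry w)) :
    pdx (fun t x => v t x + w t x) = fun t x => pdx v t x + pdx w t x :=
  funext₂ fun t x => ((hasDerivAt_pdx hv t x).add (hasDerivAt_pdx hw t x)).deriv

lemma pdt_mul_left (k : ℝ → ℝ) (w : ℝ → ℝ → ℝ) :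
    pdt (fun t x => k x * w t x) = fun t x => k x * pdt w t x :=
  funext₂ fun _ x => deriv_const_mul_field (k x)

lemma pdx_mul_left (k : ℝ → ℝ) (w : ℝ → ℝ → ℝ) :
    pdx (fun t x => k t * w t x) = fun t x => k t * pdx w t x :=
  funext₂ fun t _ => deriv_const_mul_field (k t)

lemma pdt_time_mul (hw : Differentiable ℝ (uncurry w)) :
    pdt (fun t x => t * w t x) = fun t x => w t x + t * pdt w t x :=
  funext₂ fun t x => (((hasDerivAt_id t).mul (hasDerivAt_pdt hw t x)).congr_deriv
    (by rw [one_mul, id])).deriv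

lemma pdx_space_mul (hw : Differentiable ℝ (uncurry w)) :
    pdx (fun t x => x * w t x) = fun t x => w t x + x * pdx w t x :=
  funext₂ fun t x => (((hasDerivAt_id x).mul (hasDerivAt_pdx hw t x)).congr_deriv
    (by rw [one_mul, id])).deriv

lemma pdx_pdx_space_mul (hw : ContDiff ℝ 2 (uncurry w)) :
    pdx (pdx fun t x => x * w t x) = fun t x => 2 * pdx w t x + x * pdx (pdx w) t x := by
  have hw₀ := hw.differentiable two_ne_zero
  have hw₁ := (contDiff_pdx hw one_add_one_eq_two.le).differentiable one_ne_zero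
  rw [pdx_space_mul hw₀,
    pdx_add (w := fun t x => x * pdx w t x) hw₀ (differentiable_snd.mul hw₁), pdx_space_mul hw₁]
  funext t x
  ring

lemma pdx_pdx_pdx_space_mul (hw : ContDiff ℝ 3 (uncurry w)) :
    pdx (pdx (pdx fun t x => x * w t x)) =
      fun t x => 3 * pdx (pdx w) t x + x * pdx (pdx (pdx w)) t x := by
  have hwx : ContDiff ℝ 2 (uncurry (pdx w)) := contDiff_pdx hw (by norm_num)
  have hw₁ := hwx.differentiable two_ne_zero
  have hw₂ := (contDiff_pdx hwx one_add_one_eq_two.le).differentiable one_ne_zero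
  rw [pdx_pdx_space_mul (hw.of_le (by norm_num)),
    pdx_add (v := fun t x => 2 * pdx w t x) (w := fun t x => x * pdx (pdx w) t x)
      (hw₁.const_mul 2) (differentiable_snd.mul hw₂),
    pdx_mul_left fun _ => 2, pdx_space_mul hw₂]
  funext t x
  ring

lemma pdt_comp {φ : ℝ → ℝ} (hφ : Differentiable ℝ φ) (hw : Differentiable ℝ (uncurry w)) :
    pdt (fun t x => φ (w t x)) = fun t x => deriv φ (w t x) * pdt w t x :=
  funext₂ fun t x => ((hφ (w t x)).hasDerivAt.comp t (hasDerivAt_pdt hw t x)).deriv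

lemma pdx_comp {φ : ℝ → ℝ} (hφ : Differentiable ℝ φ) (hw : Differentiable ℝ (uncurry w)) :
    pdx (fun t x => φ (w t x)) = fun t x => deriv φ (w t x) * pdx w t x :=
  funext₂ fun t x => ((hφ (w t x)).hasDerivAt.comp x (hasDerivAt_pdx hw t x)).deriv

lemma pdx_pdx_comp {φ : ℝ → ℝ} (hφ : ContDiff ℝ 2 φ) (hw : ContDiff ℝ 2 (uncurry w)) :
    pdx (pdx fun t x => φ (w t x)) = fun t x =>
      deriv (deriv φ) (w t x) * pdx w t x ^ 2 + deriv φ (w t x) * pdx (pdx w) t x := by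
  have hφ₁ : Differentiable ℝ (deriv φ) := hφ.differentiable_deriv_two
  have hw₀ := hw.differentiable two_ne_zero
  have hw₁ := (contDiff_pdx hw one_add_one_eq_two.le).differentiable one_ne_zero
  rw [pdx_comp (hφ.differentiable two_ne_zero) hw₀]
  funext t x
  refine (((hφ₁ (w t x)).hasDerivAt.comp x (hasDerivAt_pdx hw₀ t x)).mul
    (hasDerivAt_pdx hw₁ t x)).deriv.trans ?_
  simp only [comp_apply]
  ring

lemma pdx_pdx_pdx_comp {φ : ℝ → ℝ} (hφ : ContDiff ℝ 3 φ) (hw : ContDiff ℝ 3 (uncurry w)) :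
    pdx (pdx (pdx fun t x => φ (w t x))) = fun t x =>
      deriv (deriv (deriv φ)) (w t x) * pdx w t x ^ 3
        + 3 * deriv (deriv φ) (w t x) * pdx w t x * pdx (pdx w) t x
        + deriv φ (w t x) * pdx (pdx (pdx w)) t x := by
  have hφ₁ : ContDiff ℝ 2 (deriv φ) := ContDiff.deriv' hφ
  have hφ₂ : Differentiable ℝ (deriv (deriv φ)) := hφ₁.differentiable_deriv_two
  have hwx : ContDiff ℝ 2 (uncurry (pdx w)) := contDiff_pdx hw (by norm_num)
  have hw₀ := hw.differentiable three_ne_zero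
  have hw₁ := hwx.differentiable two_ne_zero
  have hw₂ := (contDiff_pdx hwx one_add_one_eq_two.le).differentiable one_ne_zero
  rw [pdx_pdx_comp (hφ.of_le (by norm_num)) (hw.of_le (by norm_num))]
  funext t x
  refine ((((hφ₂ (w t x)).hasDerivAt.comp x (hasDerivAt_pdx hw₀ t x)).mul
    ((hasDerivAt_pdx hw₁ t x).pow 2)).add
    (((hφ₁.differentiable two_ne_zero (w t x)).hasDerivAt.comp x (hasDerivAt_pdx hw₀ t x)).mul
      (hasDerivAt_pdx hw₂ t x))).deriv.trans ?_
  simp only [comp_apply, Pi.pow_apply]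
  ring

end PartialDerivatives

/-- The linearization (Fréchet derivative) of the gKN operator
`u_t - u_xxx + (3 / 2) u_xx ^ 2 / u_x - f(u) / u_x` about `u`, applied to `P`. Its kernel consists
of the solutions `P` of the determining equation `symmDet f u P`. -/
noncomputable def gKNLinearization (f : ℝ → ℝ) (u P : ℝ → ℝ → ℝ) : ℝ → ℝ → ℝ := fun t x =>
  pdt P t x - pdx (pdx (pdx P)) t x
    + 3 * (pdx (pdx u) t x / pdx u t x) * pdx (pdx P) t x
    - (3 / 2) * ((pdx (pdx u) t x) ^ 2 / (pdx u t x) ^ 2) * pdx P t x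
    + (f (u t x) / (pdx u t x) ^ 2) * pdx P t x
    - (deriv f (u t x) / pdx u t x) * P t x

section Linearization

variable {f φ : ℝ → ℝ} {u P Q : ℝ → ℝ → ℝ}

lemma gKNLinearization_add (hP : ContDiff ℝ 3 (uncurry P)) (hQ : ContDiff ℝ 3 (uncurry Q))
    (t x : ℝ) :
    gKNLinearization f u (fun t x => P t x + Q t x) t x =
      gKNLinearization f u P t x + gKNLinearization f u Q t x := by
  have hPx : ContDiff ℝ 2 (uncurry (pdx P)) := contDiff_pdx hP (by norm_num)
  have hQx : ContDiff ℝ 2 (uncurry (pdx Q)) := contDiff_pdx hQ (by norm_num)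
  have hPxx : ContDiff ℝ 1 (uncurry (pdx (pdx P))) := contDiff_pdx hPx (by norm_num)
  have hQxx : ContDiff ℝ 1 (uncurry (pdx (pdx Q))) := contDiff_pdx hQx (by norm_num)
  have hP₁ := hP.differentiable three_ne_zero
  have hQ₁ := hQ.differentiable three_ne_zero
  simp only [gKNLinearization, pdt_add hP₁ hQ₁, pdx_add hP₁ hQ₁,
    pdx_add (hPx.differentiable two_ne_zero) (hQx.differentiable two_ne_zero),
    pdx_add (hPxx.differentiable one_ne_zero) (hQxx.differentiable one_ne_zero)]
  ring

lemma gKNLinearization_const_mul (k t x : ℝ) :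
    gKNLinearization f u (fun t x => k * P t x) t x = k * gKNLinearization f u P t x := by
  simp only [gKNLinearization, pdt_mul_left fun _ => k, pdx_mul_left fun _ => k]
  ring

lemma gKNLinearization_time_mul (hP : Differentiable ℝ (uncurry P)) (t x : ℝ) :
    gKNLinearization f u (fun t x => t * P t x) t x =
      P t x + t * gKNLinearization f u P t x := by
  simp only [gKNLinearization, pdt_time_mul hP, pdx_mul_left fun t => t]
  ring

lemma gKNLinearization_space_mul (hP : ContDiff ℝ 3 (uncurry P)) (t x : ℝ) :
    gKNLinearization f u (fun t x => x * P t x) t x =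
      x * gKNLinearization f u P t x - 3 * pdx (pdx P) t x
        + 6 * (pdx (pdx u) t x / pdx u t x) * pdx P t x
        - (3 / 2) * (pdx (pdx u) t x ^ 2 / pdx u t x ^ 2) * P t x
        + f (u t x) / pdx u t x ^ 2 * P t x := by
  rw [gKNLinearization, gKNLinearization, pdx_pdx_pdx_space_mul hP,
    pdx_pdx_space_mul (hP.of_le (by norm_num)), pdx_space_mul (hP.differentiable three_ne_zero),
    pdt_mul_left fun x => x]
  ring

/-- `U`, `p`, `q`, `r` stand for `u`, `u_x`, `u_xx`, `u_xxx` along a coordinate line. -/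
lemma hasDerivAt_gKN_rhs {U p q r : ℝ → ℝ} {U' p' q' r' s : ℝ} (hf : DifferentiableAt ℝ f (U s))
    (hU : HasDerivAt U U' s) (hp : HasDerivAt p p' s) (hq : HasDerivAt q q' s)
    (hr : HasDerivAt r r' s) (hps : p s ≠ 0) :
    HasDerivAt (fun s => r s - (3 / 2) * q s ^ 2 / p s + f (U s) / p s)
      (r' - 3 * (q s / p s) * q' + (3 / 2) * (q s ^ 2 / p s ^ 2) * p'
        - f (U s) / p s ^ 2 * p' + deriv f (U s) / p s * U') s := by
  refine ((hr.sub (((hq.pow 2).const_mul (3 / 2)).div hp hps)).add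
    ((hf.hasDerivAt.comp s hU).div hp hps)).congr_deriv ?_
  simp only [comp_apply, Pi.pow_apply]
  field_simp
  ring

theorem gKNLinearization_pdx_eq_zero (hf : Differentiable ℝ f) (hu : ContDiff ℝ 4 (uncurry u))
    (hsol : isGKN f u) {t x : ℝ} (hux : pdx u t x ≠ 0) :
    gKNLinearization f u (pdx u) t x = 0 := by
  have hu₁ : ContDiff ℝ 3 (uncurry (pdx u)) := contDiff_pdx hu (by norm_num)
  have hu₂ : ContDiff ℝ 2 (uncurry (pdx (pdx u))) := contDiff_pdx hu₁ (by norm_num)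
  have hu₃ : ContDiff ℝ 1 (uncurry (pdx (pdx (pdx u)))) := contDiff_pdx hu₂ (by norm_num)
  have hutx := (hasDerivAt_gKN_rhs (hf (u t x))
    (hasDerivAt_pdx (hu.differentiable four_ne_zero) t x)
    (hasDerivAt_pdx (hu₁.differentiable three_ne_zero) t x)
    (hasDerivAt_pdx (hu₂.differentiable two_ne_zero) t x)
    (hasDerivAt_pdx (hu₃.differentiable one_ne_zero) t x) hux).deriv
  rw [← funext (hsol t)] at hutx
  change pdx (pdt u) t x = _ at hutx
  rw [gKNLinearization, pdt_pdx_comm (hu.of_le (by norm_num)), hutx]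
  ring

theorem gKNLinearization_pdt_eq_zero (hf : Differentiable ℝ f) (hu : ContDiff ℝ 4 (uncurry u))
    (hsol : isGKN f u) {t x : ℝ} (hux : pdx u t x ≠ 0) :
    gKNLinearization f u (pdt u) t x = 0 := by
  have hu₁ : ContDiff ℝ 3 (uncurry (pdx u)) := contDiff_pdx hu (by norm_num)
  have hu₂ : ContDiff ℝ 2 (uncurry (pdx (pdx u))) := contDiff_pdx hu₁ (by norm_num)
  have hu₃ : ContDiff ℝ 1 (uncurry (pdx (pdx (pdx u)))) := contDiff_pdx hu₂ (by norm_num)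
  have hutt := (hasDerivAt_gKN_rhs (U := fun s => u s x) (hf (u t x))
    (hasDerivAt_pdt (hu.differentiable four_ne_zero) t x)
    (hasDerivAt_pdt (hu₁.differentiable three_ne_zero) t x)
    (hasDerivAt_pdt (hu₂.differentiable two_ne_zero) t x)
    (hasDerivAt_pdt (hu₃.differentiable one_ne_zero) t x) hux).deriv
  rw [← funext fun s => hsol s x] at hutt
  change pdt (pdt u) t x = _ at hutt
  rw [pdt_pdx_comm hu₂, pdt_pdx_comm (hu₁.of_le (by norm_num)),
    pdt_pdx_comm (hu.of_le (by norm_num))] at hutt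
  rw [gKNLinearization, hutt]
  ring

theorem gKNLinearization_scaling (hf : Differentiable ℝ f) (hu : ContDiff ℝ 4 (uncurry u))
    (hsol : isGKN f u) {t x : ℝ} (hux : pdx u t x ≠ 0) :
    gKNLinearization f u (fun t x => 3 * (t * pdt u t x) + x * pdx u t x) t x =
      4 * (f (u t x) / pdx u t x) := by
  have hu_t : ContDiff ℝ 3 (uncurry (pdt u)) := contDiff_pdt hu (by norm_num)
  have hux₃ : ContDiff ℝ 3 (uncurry (pdx u)) := contDiff_pdx hu (by norm_num)
  rw [gKNLinearization_add (P := fun t x => 3 * (t * pdt u t x)) (Q := fun t x => x * pdx u t x)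
      (contDiff_const.mul (contDiff_fst.mul hu_t)) (contDiff_snd.mul hux₃),
    gKNLinearization_const_mul, gKNLinearization_time_mul (hu_t.differentiable three_ne_zero),
    gKNLinearization_space_mul hux₃, gKNLinearization_pdt_eq_zero hf hu hsol hux,
    gKNLinearization_pdx_eq_zero hf hu hsol hux, hsol t x]
  field_simp
  ring

theorem gKNLinearization_comp (hφ : ContDiff ℝ 3 φ) (hu : ContDiff ℝ 3 (uncurry u))
    (hsol : isGKN f u) {t x : ℝ} (hux : pdx u t x ≠ 0) :
    gKNLinearization f u (fun t x => φ (u t x)) t x =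
      (2 * deriv φ (u t x) * f (u t x) - deriv f (u t x) * φ (u t x)) / pdx u t x
        - deriv (deriv (deriv φ)) (u t x) * pdx u t x ^ 3 := by
  have hφ₀ := hφ.differentiable three_ne_zero
  have hu₀ := hu.differentiable three_ne_zero
  rw [gKNLinearization, pdx_pdx_pdx_comp hφ hu,
    pdx_pdx_comp (hφ.of_le (by norm_num)) (hu.of_le (by norm_num)), pdx_comp hφ₀ hu₀,
    pdt_comp hφ₀ hu₀]
  simp only [hsol t x]
  field_simp
  ring

theorem symmDet_comp_add_scaling {a : ℝ} (hf : Differentiable ℝ f) (hφ : ContDiff ℝ 3 φ)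
    (hφ₃ : ∀ v, deriv (deriv (deriv φ)) v = 0)
    (hfφ : ∀ v, deriv f v * φ v = (2 * deriv φ v + 4 * a) * f v)
    (hu : ContDiff ℝ 4 (uncurry u)) (hux : ∀ t x, pdx u t x ≠ 0) (hsol : isGKN f u) :
    symmDet f u (fun t x => φ (u t x) + a * (3 * (t * pdt u t x) + x * pdx u t x)) := by
  intro t x
  have hu_t : ContDiff ℝ 3 (uncurry (pdt u)) := contDiff_pdt hu (by norm_num)
  have hux₃ : ContDiff ℝ 3 (uncurry (pdx u)) := contDiff_pdx hu (by norm_num)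
  have hu₃ : ContDiff ℝ 3 (uncurry u) := hu.of_le (by norm_num)
  have hscal : ContDiff ℝ 3 (uncurry fun t x => a * (3 * (t * pdt u t x) + x * pdx u t x)) :=
    contDiff_const.mul
      ((contDiff_const.mul (contDiff_fst.mul hu_t)).add (contDiff_snd.mul hux₃))
  change gKNLinearization f u _ t x = 0
  rw [gKNLinearization_add (P := fun t x => φ (u t x)) (hφ.comp hu₃) hscal,
    gKNLinearization_const_mul, gKNLinearization_scaling hf hu hsol (hux t x),
    gKNLinearization_comp hφ hu₃ hsol (hux t x), hφ₃]
  linear_combination -hfφ (u t x) / pdx u t x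

end Linearization

lemma hasDerivAt_arctan_add_div (b : ℝ) {c : ℝ} (hc : c ≠ 0) (v : ℝ) :
    HasDerivAt (fun v => arctan ((v + b) / c)) (c / ((v + b) ^ 2 + c ^ 2)) v := by
  refine (((hasDerivAt_id v).add_const b).div_const c).arctan.congr_deriv ?_
  have : (v + b) ^ 2 + c ^ 2 ≠ 0 := by positivity
  have : 1 + ((v + b) / c) ^ 2 ≠ 0 := by positivity
  simp only [id]
  field_simp
  ring

/-- The nonlinearity of the case `3e`, chosen so that `f' / f = (2 φ' + 4 a) / φ` for
`φ(v) = (v + b) ^ 2 + c ^ 2`. -/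
noncomputable def nonlinearityX3e (C a b c : ℝ) : ℝ → ℝ := fun v =>
  C * ((v + b) ^ 2 + c ^ 2) ^ 2 * exp ((4 * a / c) * arctan ((v + b) / c))

lemma hasDerivAt_nonlinearityX3e (C a b : ℝ) {c : ℝ} (hc : c ≠ 0) (v : ℝ) :
    HasDerivAt (nonlinearityX3e C a b c)
      ((4 * (v + b) + 4 * a) / ((v + b) ^ 2 + c ^ 2) * nonlinearityX3e C a b c v) v := by
  have hφ : HasDerivAt (fun v => (v + b) ^ 2 + c ^ 2) (2 * (v + b)) v := by
    simpa using (((hasDerivAt_id v).add_const b).pow 2).add_const (c ^ 2)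
  have hexp := ((hasDerivAt_arctan_add_div b hc v).const_mul (4 * a / c)).exp
  refine (((hφ.pow 2).const_mul C).mul hexp).congr_deriv ?_
  have : (v + b) ^ 2 + c ^ 2 ≠ 0 := by positivity
  simp only [nonlinearityX3e, Pi.pow_apply]
  field_simp
  ring

theorem gKN_point_symmetry_X3e_general (C a b c : ℝ) (hc : c ≠ 0)
    (u : ℝ → ℝ → ℝ) (hu : ContDiff ℝ 4 (uncurry u)) (hux : ∀ t x, pdx u t x ≠ 0)
    (hsol : isGKN (nonlinearityX3e C a b c) u) :
    symmDet (nonlinearityX3e C a b c) u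
      (fun t x => ((u t x + b) ^ 2 + c ^ 2) + 3 * a * t * pdt u t x + a * x * pdx u t x) := by
  have hφ₁ : deriv (fun v => (v + b) ^ 2 + c ^ 2) = fun v => 2 * (v + b) := by
    funext v; simp
  have hφ₃ (v : ℝ) : deriv (deriv (deriv fun v => (v + b) ^ 2 + c ^ 2)) v = 0 := by
    simp [hφ₁]
  have hf' := hasDerivAt_nonlinearityX3e C a b hc
  have hfφ (v : ℝ) : deriv (nonlinearityX3e C a b c) v * ((v + b) ^ 2 + c ^ 2) =
      (2 * deriv (fun v => (v + b) ^ 2 + c ^ 2) v + 4 * a) * nonlinearityX3e C a b c v := by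
    have : (v + b) ^ 2 + c ^ 2 ≠ 0 := by positivity
    rw [(hf' v).deriv, hφ₁]
    field_simp
    ring
  convert symmDet_comp_add_scaling (fun v => (hf' v).differentiableAt) (by fun_prop) hφ₃ hfφ
    hu hux hsol using 3
  ring

/-- Point symmetry `X₃e = -3at ∂_t - ax ∂_x + ((u+b)²+c²) ∂_u` of the gKN equation with
`f(u) = C ((u+b)²+c²)² exp((4a/c) arctan((u+b)/c))`: its characteristic
`P = ((u+b)²+c²) + 3at u_t + ax u_x` satisfies the symmetry determining equation. -/
theorem gKN_point_symmetry_X3e (C a b c : ℝ) (hC : C ≠ 0) (hc : c ≠ 0)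
    (u : ℝ → ℝ → ℝ) (hu : ContDiff ℝ (⊤ : ℕ∞) (Function.uncurry u))
    (hux : ∀ t x, pdx u t x ≠ 0)
    (hsol : isGKN
      (fun v => C * ((v + b)^2 + c^2)^2 * Real.exp ((4 * a / c) * Real.arctan ((v + b) / c))) u) :
    symmDet
      (fun v => C * ((v + b)^2 + c^2)^2 * Real.exp ((4 * a / c) * Real.arctan ((v + b) / c))) u
      (fun t x => ((u t x + b)^2 + c^2) + 3 * a * t * pdt u t x + a * x * pdx u t x) :=
  gKN_point_symmetry_X3e_general C a b c hc u (mod_cast contDiff_infty.1 hu 4) hux hsol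
end

section
/- Let f(u) = C₁u⁴ + C₂u³ + C₃u² + C₄u + C₅ be a quartic polynomial with real coefficients. Let u(t,x) be a smooth real-valued solution of the gKN equation with f, such that u_x(t,x) ≠ 0 for all (t,x). Define P(t,x) = u_xxxxx − 5·u_xxxx·u_xx/u_x − (5/2)·u_xxx²/u_x + (25/2)·u_xxx·u_xx²/u_x² − (45/8)·u_xx⁴/u_x³ − (5/3)·u_xxx·f(u)/u_x² + (25/6)·u_xx²·f(u)/u_x³ − (5/3)·u_xx·f'(u)/u_x − (5/18)·f(u)²/u_x³ + (5/9)·u_x·f''(u), where all derivatives of u are evaluated at (t,x). Then P satisfies the symmetry determining equation ∂_t P − ∂_x³ P + 3(u_xx/u_x)∂_x² P − (3/2)(u_xx²/u_x²)∂_x P + (f(u)/u_x²)∂_x P − (f'(u)/u_x)P = 0 at every point (t,x). (This is the fifth-order local symmetry of the Krichever–Novikov equation.) -/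
open Real

open scoped ContDiff Manifold Polynomial

/-!
Let `S` be the Schwarzian derivative of `u` and `g = f(u) / u_x ^ 2`. The gKN equation reads
`u_t = (S + g) u_x`, and writing `P = u_x Q` removes the zeroth-order term of the symmetry
determining equation, which becomes `Q_t = Q_xxx + (3 S - g) Q_x`. For the fifth-order
characteristic, `18 Q = 18 S_xx + 27 S ^ 2 + 10 g_xx - 10 S g - 5 g ^ 2` involves only `S` and
`g`, and these evolve by `S_t = w_xxx + 2 S w_x + S_x w` and `g_t = w g_x - 2 g w_x` with
`w = S + g`. Hence `18 Q` solves the reduced equation up to `8` times Bol's fifth-order operator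
applied to `g`. By Bol's lemma that operator turns `f(u) / u_x ^ 2` into `f⁽⁵⁾(u) u_x ^ 3`, which
is zero for a quartic `f`.
-/

/-- The left-hand side of the symmetry determining equation of the gKN equation, as a function of
`P`; `symmDet f u P` says that it vanishes identically. -/
noncomputable def determiningOperator (f : ℝ → ℝ) (u P : ℝ → ℝ → ℝ) : ℝ → ℝ → ℝ := fun t x =>
  pdt P t x - pdx (pdx (pdx P)) t x
    + 3 * (pdx (pdx u) t x / pdx u t x) * pdx (pdx P) t x
    - (3 / 2) * ((pdx (pdx u) t x) ^ 2 / (pdx u t x) ^ 2) * pdx P t x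
    + (f (u t x) / (pdx u t x) ^ 2) * pdx P t x
    - (deriv f (u t x) / pdx u t x) * P t x

/-- The characteristic `P` of the fifth-order symmetry of the Krichever-Novikov equation,
for an arbitrary nonlinearity `f`. -/
noncomputable def fifthOrderCharacteristic (f : ℝ → ℝ) (u : ℝ → ℝ → ℝ) : ℝ → ℝ → ℝ := fun t x =>
  pdx (pdx (pdx (pdx (pdx u)))) t x
    - 5 * pdx (pdx (pdx (pdx u))) t x * pdx (pdx u) t x / pdx u t x
    - (5 / 2) * pdx (pdx (pdx u)) t x ^ 2 / pdx u t x
    + (25 / 2) * pdx (pdx (pdx u)) t x * pdx (pdx u) t x ^ 2 / pdx u t x ^ 2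
    - (45 / 8) * pdx (pdx u) t x ^ 4 / pdx u t x ^ 3
    - (5 / 3) * pdx (pdx (pdx u)) t x * f (u t x) / pdx u t x ^ 2
    + (25 / 6) * pdx (pdx u) t x ^ 2 * f (u t x) / pdx u t x ^ 3
    - (5 / 3) * pdx (pdx u) t x * deriv f (u t x) / pdx u t x
    - (5 / 18) * f (u t x) ^ 2 / pdx u t x ^ 3
    + (5 / 9) * pdx u t x * deriv (deriv f) (u t x)

section DifferentialRing

variable {R A : Type*} [CommRing R] [CommRing A] [Algebra R A]

theorem derivation_ofNat (D : Derivation R A A) (n : ℕ) [n.AtLeastTwo] : D (ofNat(n) : A) = 0 :=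
  D.map_natCast n

/-- The Schwarzian derivative `u_xxx / u_x - (3/2) (u_xx / u_x) ^ 2` of `u`, written in terms of
`v = u_xx / (2 u_x)` so that no division is needed. -/
def schwarzian (Dx : Derivation R A A) (v : A) : A :=
  2 * (Dx v - v ^ 2)

/-- Bol's fifth-order projectively invariant operator: the fourth symmetric power of the Hill
operator `y ↦ y'' + (S / 2) y`. -/
def bolOperator (Dx : Derivation R A A) (S g : A) : A :=
  Dx (Dx (Dx (Dx (Dx g)))) + 10 * S * Dx (Dx (Dx g)) + 15 * Dx S * Dx (Dx g)
    + (9 * Dx (Dx S) + 16 * S ^ 2) * Dx g + (2 * Dx (Dx (Dx S)) + 16 * S * Dx S) * g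

/-- The projectively invariant form `Q` of the fifth-order symmetry: its characteristic is
`u_x * Q / 18`, where `S` is the Schwarzian derivative of `u` and `g = f(u) / u_x ^ 2`.
The factor `18` clears denominators. -/
def invariantCharacteristic (Dx : Derivation R A A) (S g : A) : A :=
  18 * Dx (Dx S) + 27 * S ^ 2 + 10 * Dx (Dx g) - 10 * S * g - 5 * g ^ 2

/-- `determiningOperator` in a differential ring, with `v = u_xx / (2 u_x)` and
`g = f(u) / u_x ^ 2`. The coefficient `f'(u) / u_x` becomes `g_x + 4 v g`. -/
def algebraicDeterminingOperator (Dx Dt : Derivation R A A) (v g P : A) : A :=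
  Dt P - Dx (Dx (Dx P)) + 6 * v * Dx (Dx P) - 6 * v ^ 2 * Dx P + g * Dx P
    - (Dx g + 4 * v * g) * P

variable {Dx Dt : Derivation R A A} {u v w r a b c g S : A}

theorem deriv_three_eq_schwarzian (hv : Dx (Dx u) = 2 * v * Dx u) :
    Dx (Dx (Dx u)) = Dx u * (schwarzian Dx v + 6 * v ^ 2) := by
  simp only [schwarzian, hv, Derivation.leibniz, smul_eq_mul, derivation_ofNat]
  ring

theorem two_mul_deriv_eq_schwarzian (Dx : Derivation R A A) (v : A) :
    2 * Dx v = schwarzian Dx v + 2 * v ^ 2 := by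
  rw [schwarzian]
  ring

theorem deriv_four_eq_schwarzian (hv : Dx (Dx u) = 2 * v * Dx u) :
    Dx (Dx (Dx (Dx u))) =
      Dx u * (Dx (schwarzian Dx v) + 8 * v * schwarzian Dx v + 24 * v ^ 3) := by
  rw [deriv_three_eq_schwarzian hv]
  simp only [hv, pow_two, map_add, Derivation.leibniz, smul_eq_mul, derivation_ofNat]
  linear_combination 6 * v * Dx u * two_mul_deriv_eq_schwarzian Dx v

theorem deriv_five_eq_schwarzian (hv : Dx (Dx u) = 2 * v * Dx u) :
    Dx (Dx (Dx (Dx (Dx u)))) =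
      Dx u * (Dx (Dx (schwarzian Dx v)) + 10 * v * Dx (schwarzian Dx v)
        + 4 * schwarzian Dx v ^ 2 + 60 * v ^ 2 * schwarzian Dx v + 120 * v ^ 4) := by
  rw [deriv_four_eq_schwarzian hv]
  simp only [hv, pow_succ, pow_zero, one_mul, map_add, Derivation.leibniz, smul_eq_mul,
    derivation_ofNat]
  linear_combination
    (4 * schwarzian Dx v + 36 * v ^ 2) * Dx u * two_mul_deriv_eq_schwarzian Dx v

theorem deriv_inv_deriv (hr : r * Dx u = 1) (hv : Dx (Dx u) = 2 * v * Dx u) :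
    Dx r = -2 * v * r := by
  rw [Dx.leibniz_of_mul_eq_one hr, hv, smul_eq_mul]
  linear_combination -2 * v * r * hr

theorem deriv_mul_inv_deriv (hr : r * Dx u = 1) (hv : Dx (Dx u) = 2 * v * Dx u)
    (ha : Dx a = b * Dx u) : Dx (a * r) = b - 2 * v * (a * r) := by
  simp only [Derivation.leibniz, smul_eq_mul, ha, deriv_inv_deriv hr hv]
  linear_combination b * hr

theorem deriv_mul_inv_deriv_sq (hr : r * Dx u = 1) (hv : Dx (Dx u) = 2 * v * Dx u)
    (ha : Dx a = b * Dx u) : Dx (a * r ^ 2) = b * r - 4 * v * (a * r ^ 2) := by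
  simp only [pow_two, Derivation.leibniz, smul_eq_mul, ha, deriv_inv_deriv hr hv]
  linear_combination b * r * hr

theorem deriv_deriv_mul_inv_deriv_sq (hr : r * Dx u = 1) (hv : Dx (Dx u) = 2 * v * Dx u)
    (ha : Dx a = b * Dx u) (hb : Dx b = c * Dx u) :
    Dx (Dx (a * r ^ 2)) =
      c - 6 * v * (b * r) + (12 * v ^ 2 - 2 * schwarzian Dx v) * (a * r ^ 2) := by
  rw [deriv_mul_inv_deriv_sq hr hv ha, map_sub, deriv_mul_inv_deriv hr hv hb, Dx.leibniz,
    deriv_mul_inv_deriv_sq hr hv ha]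
  simp only [Derivation.leibniz, smul_eq_mul, derivation_ofNat]
  linear_combination -2 * (a * r ^ 2) * two_mul_deriv_eq_schwarzian Dx v

theorem bolOperator_schwarzian {f : ℕ → A} (hr : r * Dx u = 1) (hv : Dx (Dx u) = 2 * v * Dx u)
    (hf : ∀ k, Dx (f k) = f (k + 1) * Dx u) :
    bolOperator Dx (schwarzian Dx v) (f 0 * r ^ 2) = f 5 * Dx u ^ 3 := by
  have hg := deriv_mul_inv_deriv_sq hr hv (hf 0)
  have hh := deriv_mul_inv_deriv hr hv (hf 1)
  generalize f 0 * r ^ 2 = g at *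
  generalize f 1 * r = h at *
  simp only [bolOperator, schwarzian, hg, hh, hf, hv, pow_two, map_add, map_sub, map_zero,
    Derivation.leibniz, smul_eq_mul, derivation_ofNat, mul_zero]
  ring

theorem dt_schwarzian (comm : ∀ a, Dt (Dx a) = Dx (Dt a)) (hreg : IsLeftRegular (Dx u))
    (hv : Dx (Dx u) = 2 * v * Dx u) (hu : Dt u = w * Dx u) :
    Dt (schwarzian Dx v) =
      Dx (Dx (Dx w)) + 2 * schwarzian Dx v * Dx w + Dx (schwarzian Dx v) * w := by
  have hDtv : 2 * Dt v = Dx (Dx w + 2 * v * w) := by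
    refine hreg ?_
    have h := congrArg Dt hv
    rw [comm, comm] at h
    simp only [comm, hu, hv, map_add, Derivation.leibniz, smul_eq_mul, derivation_ofNat,
      mul_zero] at h ⊢
    linear_combination -h
  have hDxDtv := congrArg Dx hDtv
  simp only [schwarzian, comm, pow_two, map_add, map_sub, map_zero, Derivation.leibniz,
    smul_eq_mul, derivation_ofNat, mul_zero] at hDtv hDxDtv ⊢
  linear_combination hDxDtv - 2 * v * hDtv

theorem dt_mul_inv_deriv_sq (comm : ∀ a, Dt (Dx a) = Dx (Dt a)) (hr : r * Dx u = 1)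
    (hv : Dx (Dx u) = 2 * v * Dx u) (hu : Dt u = w * Dx u) (hax : Dx a = b * Dx u)
    (hat : Dt a = b * Dt u) :
    Dt (a * r ^ 2) = w * Dx (a * r ^ 2) - 2 * (a * r ^ 2) * Dx w := by
  have hDtr : Dt r = -r * (Dx w + 2 * v * w) := by
    rw [Dt.leibniz_of_mul_eq_one hr, comm, hu, Dx.leibniz, hv]
    simp only [smul_eq_mul]
    linear_combination -r * (Dx w + 2 * v * w) * hr
  rw [deriv_mul_inv_deriv_sq hr hv hax]
  simp only [pow_two, Derivation.leibniz, smul_eq_mul, hDtr, hat, hu]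
  linear_combination b * w * r * hr

theorem algebraicDeterminingOperator_smul (Dx Dt : Derivation R A A) (v g : A) (k : R) (P : A) :
    algebraicDeterminingOperator Dx Dt v g (k • P) =
      k • algebraicDeterminingOperator Dx Dt v g P := by
  simp only [algebraicDeterminingOperator, Derivation.map_smul, mul_smul_comm, smul_sub, smul_add]

theorem algebraicDeterminingOperator_deriv_mul (comm : ∀ a, Dt (Dx a) = Dx (Dt a))
    (hv : Dx (Dx u) = 2 * v * Dx u) (hu : Dt u = (schwarzian Dx v + g) * Dx u) (Q : A) :
    algebraicDeterminingOperator Dx Dt v g (Dx u * Q) =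
      Dx u * (Dt Q - Dx (Dx (Dx Q)) - (3 * schwarzian Dx v - g) * Dx Q) := by
  simp only [algebraicDeterminingOperator, schwarzian, comm, hu, hv, pow_two, map_add, map_sub,
    map_zero, Derivation.leibniz, smul_eq_mul, derivation_ofNat, mul_zero]
  ring

theorem invariantCharacteristic_evolution (comm : ∀ a, Dt (Dx a) = Dx (Dt a))
    (hS : Dt S = Dx (Dx (Dx (S + g))) + 2 * S * Dx (S + g) + Dx S * (S + g))
    (hg : Dt g = (S + g) * Dx g - 2 * g * Dx (S + g)) :
    Dt (invariantCharacteristic Dx S g) - Dx (Dx (Dx (invariantCharacteristic Dx S g)))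
        - (3 * S - g) * Dx (invariantCharacteristic Dx S g) =
      8 * bolOperator Dx S g := by
  simp only [invariantCharacteristic, bolOperator, comm, hS, hg, pow_two, map_add, map_sub,
    map_zero, Derivation.leibniz, smul_eq_mul, derivation_ofNat, mul_zero]
  ring

theorem algebraicDeterminingOperator_invariantCharacteristic {f : ℕ → A}
    (comm : ∀ a, Dt (Dx a) = Dx (Dt a)) (hr : r * Dx u = 1) (hv : Dx (Dx u) = 2 * v * Dx u)
    (hfx : ∀ k, Dx (f k) = f (k + 1) * Dx u) (hft : Dt (f 0) = f 1 * Dt u)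
    (hu : Dt u = (schwarzian Dx v + f 0 * r ^ 2) * Dx u) :
    algebraicDeterminingOperator Dx Dt v (f 0 * r ^ 2)
        (Dx u * invariantCharacteristic Dx (schwarzian Dx v) (f 0 * r ^ 2)) =
      8 * f 5 * Dx u ^ 4 := by
  have hS := dt_schwarzian comm (isLeftRegular_of_mul_eq_one hr) hv hu
  have hg := dt_mul_inv_deriv_sq comm hr hv hu (hfx 0) hft
  rw [algebraicDeterminingOperator_deriv_mul comm hv hu,
    invariantCharacteristic_evolution comm hS hg, bolOperator_schwarzian hr hv hfx]
  ring

end DifferentialRing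

/-- The algebra of smooth real-valued functions on a normed space. -/
abbrev SmoothFun (E : Type*) [NormedAddCommGroup E] [NormedSpace ℝ E] := C^∞⟮𝓘(ℝ, E), E; ℝ⟯

namespace SmoothFun

variable {E : Type*} [NormedAddCommGroup E] [NormedSpace ℝ E]

theorem contDiff (a : SmoothFun E) : ContDiff ℝ ∞ a :=
  a.contMDiff.contDiff

theorem differentiable (a : SmoothFun E) : Differentiable ℝ a :=
  a.contDiff.differentiable (by simp)

theorem contDiff_fderiv (a : SmoothFun E) : ContDiff ℝ ∞ (fderiv ℝ a) :=
  a.contDiff.fderiv_right (by simp)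

theorem ofNat_apply (n : ℕ) [n.AtLeastTwo] (q : E) : (ofNat(n) : SmoothFun E) q = ofNat(n) :=
  map_ofNat (ContMDiffMap.evalRingHom q) n

theorem exists_mul_eq_one {a : SmoothFun E} (ha : ∀ q, a q ≠ 0) : ∃ b, b * a = 1 :=
  ⟨⟨fun q => (a q)⁻¹, (a.contDiff.inv ha).contMDiff⟩,
    ContMDiffMap.ext fun q => inv_mul_cancel₀ (ha q)⟩

theorem apply_eq_inv {a b : SmoothFun E} (h : b * a = 1) (q : E) : b q = (a q)⁻¹ :=
  eq_inv_of_mul_eq_one_left (congrArg (· q) h)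

theorem apply_ne_zero {a b : SmoothFun E} (h : b * a = 1) (q : E) : a q ≠ 0 :=
  right_ne_zero_of_mul_eq_one (congrArg (· q) h)

/-- Differentiation along the constant vector field `e`. -/
noncomputable def dirDeriv (e : E) : Derivation ℝ (SmoothFun E) (SmoothFun E) :=
  Derivation.mk'
    { toFun a := ⟨fun q => fderiv ℝ a q e,
        (a.contDiff_fderiv.clm_apply contDiff_const).contMDiff⟩
      map_add' a b := ContMDiffMap.ext fun q =>
        congrArg (· e) (fderiv_add (a.differentiable q) (b.differentiable q))
      map_smul' c a := ContMDiffMap.ext fun q =>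
        congrArg (· e) (fderiv_const_smul (a.differentiable q) c) }
    fun a b => ContMDiffMap.ext fun q =>
      congrArg (· e) (fderiv_mul (a.differentiable q) (b.differentiable q))

theorem dirDeriv_apply (e : E) (a : SmoothFun E) (q : E) : dirDeriv e a q = fderiv ℝ a q e :=
  rfl

theorem dirDeriv_comm (e e' : E) (a : SmoothFun E) :
    dirDeriv e (dirDeriv e' a) = dirDeriv e' (dirDeriv e a) := by
  have dirDeriv_dirDeriv (d d' q : E) :
      dirDeriv d (dirDeriv d' a) q = fderiv ℝ (fderiv ℝ a) q d d' := by
    have h := (a.contDiff_fderiv.differentiable (by simp) q).hasFDerivAt.clm_apply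
      (hasFDerivAt_const d' q)
    calc dirDeriv d (dirDeriv d' a) q = fderiv ℝ (fun p => fderiv ℝ a p d') q d := rfl
      _ = fderiv ℝ (fderiv ℝ a) q d d' := by simp [h.fderiv]
  ext q
  rw [dirDeriv_dirDeriv, dirDeriv_dirDeriv]
  exact a.contDiff.contDiffAt.isSymmSndFDerivAt (by simpa using ENat.LEInfty.out) e e'

theorem dirDeriv_comp (e : E) (F : SmoothFun ℝ) (a : SmoothFun E) :
    dirDeriv e (F.comp a) = (dirDeriv 1 F).comp a * dirDeriv e a := by
  ext q
  have h : fderiv ℝ (F.comp a) q = (fderiv ℝ F (a q)).comp (fderiv ℝ a q) :=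
    fderiv_comp q (F.differentiable (a q)) (a.differentiable q)
  simp [dirDeriv_apply, h, mul_comm]

theorem coe_dirDeriv_one (F : SmoothFun ℝ) : ⇑(dirDeriv 1 F) = deriv F :=
  rfl

theorem coe_iterate_dirDeriv_one (F : SmoothFun ℝ) (k : ℕ) :
    ⇑((dirDeriv 1)^[k] F) = iteratedDeriv k F := by
  induction k with
  | zero => simp
  | succ k ih => rw [Function.iterate_succ_apply', coe_dirDeriv_one, ih, iteratedDeriv_succ]

theorem pdx_coe (a : SmoothFun (ℝ × ℝ)) :
    pdx (fun t x => a (t, x)) = fun t x => dirDeriv (0, 1) a (t, x) := by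
  funext t x
  have h : HasDerivAt (fun y : ℝ => (t, y)) (0, 1) x :=
    (hasDerivAt_const x t).prodMk (hasDerivAt_id x)
  exact ((a.differentiable (t, x)).hasFDerivAt.comp_hasDerivAt x h).deriv

theorem pdt_coe (a : SmoothFun (ℝ × ℝ)) :
    pdt (fun t x => a (t, x)) = fun t x => dirDeriv (1, 0) a (t, x) := by
  funext t x
  have h : HasDerivAt (fun s : ℝ => (s, x)) (1, 0) t :=
    (hasDerivAt_id t).prodMk (hasDerivAt_const t x)
  exact ((a.differentiable (t, x)).hasFDerivAt.comp_hasDerivAt t h).deriv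

end SmoothFun

section SmoothSolutions

open SmoothFun

local notation "∂ₓ" => dirDeriv ((0, 1) : ℝ × ℝ)
local notation "∂ₜ" => dirDeriv ((1, 0) : ℝ × ℝ)

variable {F : SmoothFun ℝ} {U r v : SmoothFun (ℝ × ℝ)}

theorem dt_eq_schwarzian_add_mul_dx (hr : r * ∂ₓ U = 1) (hv : ∂ₓ (∂ₓ U) = 2 * v * ∂ₓ U)
    (hsol : isGKN F fun t x => U (t, x)) :
    ∂ₜ U = (schwarzian ∂ₓ v + F.comp U * r ^ 2) * ∂ₓ U := by
  ext ⟨t, x⟩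
  have hne := apply_ne_zero hr (t, x)
  have h := hsol t x
  simp only [pdx_coe, pdt_coe] at h
  rw [h, deriv_three_eq_schwarzian hv, hv]
  simp only [ContMDiffMap.coe_mul, ContMDiffMap.coe_add, ContMDiffMap.coe_pow, Pi.mul_apply,
    Pi.add_apply, ofNat_apply, Pi.pow_apply, ContMDiffMap.comp_apply, apply_eq_inv hr, inv_pow]
  field_simp
  ring

theorem determiningOperator_coe (hr : r * ∂ₓ U = 1) (hv : ∂ₓ (∂ₓ U) = 2 * v * ∂ₓ U)
    (P : SmoothFun (ℝ × ℝ)) :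
    determiningOperator F (fun t x => U (t, x)) (fun t x => P (t, x)) = fun t x =>
      algebraicDeterminingOperator ∂ₓ ∂ₜ v (F.comp U * r ^ 2) P (t, x) := by
  funext t x
  have hne := apply_ne_zero hr (t, x)
  simp only [determiningOperator, algebraicDeterminingOperator, pdx_coe, pdt_coe, hv,
    deriv_mul_inv_deriv_sq hr hv (dirDeriv_comp _ F U), ← coe_dirDeriv_one]
  simp only [ContMDiffMap.coe_mul, Pi.mul_apply, ofNat_apply, sub_add_cancel, ContMDiffMap.coe_sub,
    ContMDiffMap.coe_add, ContMDiffMap.coe_pow, Pi.sub_apply, Pi.add_apply, Pi.pow_apply,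
    ContMDiffMap.comp_apply, apply_eq_inv hr, inv_pow]
  field_simp
  ring

theorem fifthOrderCharacteristic_coe (hr : r * ∂ₓ U = 1) (hv : ∂ₓ (∂ₓ U) = 2 * v * ∂ₓ U) :
    fifthOrderCharacteristic F (fun t x => U (t, x)) = fun t x =>
      ((1 / 18 : ℝ) • (∂ₓ U * invariantCharacteristic ∂ₓ (schwarzian ∂ₓ v) (F.comp U * r ^ 2)) :
        SmoothFun (ℝ × ℝ)) (t, x) := by
  funext t x
  have hne := apply_ne_zero hr (t, x)
  simp only [fifthOrderCharacteristic, invariantCharacteristic, pdx_coe, ← coe_dirDeriv_one]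
  rw [deriv_five_eq_schwarzian hv, deriv_four_eq_schwarzian hv, deriv_three_eq_schwarzian hv, hv,
    deriv_deriv_mul_inv_deriv_sq hr hv (dirDeriv_comp _ F U) (dirDeriv_comp _ (dirDeriv 1 F) U)]
  simp only [ContMDiffMap.coe_mul, ContMDiffMap.coe_add, ContMDiffMap.coe_pow, Pi.mul_apply,
    Pi.add_apply, ofNat_apply, Pi.pow_apply, ContMDiffMap.coe_smul, ContMDiffMap.coe_sub,
    Pi.smul_apply, Pi.sub_apply, ContMDiffMap.comp_apply, apply_eq_inv hr, inv_pow, smul_eq_mul]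
  field_simp
  ring

theorem determiningOperator_fifthOrderCharacteristic_coe (hU : ∀ q, ∂ₓ U q ≠ 0)
    (hsol : isGKN F fun t x => U (t, x)) (t x : ℝ) :
    determiningOperator F (fun t x => U (t, x)) (fifthOrderCharacteristic F fun t x => U (t, x))
      t x = 4 / 9 * ∂ₓ U (t, x) ^ 4 * iteratedDeriv 5 F (U (t, x)) := by
  obtain ⟨r, hr⟩ := exists_mul_eq_one hU
  obtain ⟨v, hv⟩ : ∃ v, ∂ₓ (∂ₓ U) = 2 * v * ∂ₓ U := by
    refine ⟨(1 / 2 : ℝ) • (∂ₓ (∂ₓ U) * r), ?_⟩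
    ext q
    have hne := hU q
    simp only [ContMDiffMap.coe_smul, ContMDiffMap.coe_mul, Pi.smul_apply, Pi.mul_apply,
      ofNat_apply, apply_eq_inv hr, smul_eq_mul]
    field_simp
  have hfx (k : ℕ) : ∂ₓ (((dirDeriv 1)^[k] F).comp U) = ((dirDeriv 1)^[k + 1] F).comp U * ∂ₓ U := by
    rw [dirDeriv_comp, Function.iterate_succ_apply']
  have hdefect : algebraicDeterminingOperator ∂ₓ ∂ₜ v (F.comp U * r ^ 2)
      (∂ₓ U * invariantCharacteristic ∂ₓ (schwarzian ∂ₓ v) (F.comp U * r ^ 2)) =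
        8 * ((dirDeriv 1)^[5] F).comp U * ∂ₓ U ^ 4 :=
    algebraicDeterminingOperator_invariantCharacteristic
      (f := fun k => ((dirDeriv 1)^[k] F).comp U) (dirDeriv_comm _ _) hr hv hfx
      (dirDeriv_comp _ F U) (dt_eq_schwarzian_add_mul_dx hr hv hsol)
  have hf5 : (((dirDeriv 1)^[5] F).comp U) (t, x) = iteratedDeriv 5 F (U (t, x)) :=
    congrFun (coe_iterate_dirDeriv_one F 5) (U (t, x))
  rw [fifthOrderCharacteristic_coe hr hv, determiningOperator_coe hr hv,
    algebraicDeterminingOperator_smul, hdefect, ← hf5]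
  simp only [ContMDiffMap.coe_smul, ContMDiffMap.coe_mul, ContMDiffMap.coe_pow, Pi.smul_apply,
    Pi.mul_apply, ofNat_apply, Pi.pow_apply, smul_eq_mul]
  ring

end SmoothSolutions

theorem iteratedDeriv_eval_eq_zero {𝕜 : Type*} [NontriviallyNormedField 𝕜] {p : 𝕜[X]} {n : ℕ}
    (h : p.natDegree < n) : iteratedDeriv n (fun x => p.eval x) = 0 := by
  have iterate (k : ℕ) (q : 𝕜[X]) :
      iteratedDeriv k (fun x => q.eval x) = fun x => (Polynomial.derivative^[k] q).eval x := by
    induction k generalizing q with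
    | zero => simp
    | succ k ih =>
      rw [iteratedDeriv_succ', Function.iterate_succ_apply, ← ih]
      exact congrArg _ (funext fun x => q.deriv)
  rw [iterate, Polynomial.iterate_derivative_eq_zero h]
  simp [Pi.zero_def]

theorem KN_fifth_order_symmetry_general {f : ℝ → ℝ} (hf : ContDiff ℝ ∞ f) {u : ℝ → ℝ → ℝ}
    (hu : ContDiff ℝ ∞ (Function.uncurry u)) (hux : ∀ t x, pdx u t x ≠ 0) (hsol : isGKN f u)
    (t x : ℝ) :
    determiningOperator f u (fifthOrderCharacteristic f u) t x =
      4 / 9 * pdx u t x ^ 4 * iteratedDeriv 5 f (u t x) := by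
  obtain ⟨U, rfl⟩ : ∃ U : SmoothFun (ℝ × ℝ), u = fun t x => U (t, x) :=
    ⟨⟨Function.uncurry u, hu.contMDiff⟩, rfl⟩
  obtain ⟨F, rfl⟩ : ∃ F : SmoothFun ℝ, f = F := ⟨⟨f, hf.contMDiff⟩, rfl⟩
  simp only [SmoothFun.pdx_coe] at hux ⊢
  exact determiningOperator_fifthOrderCharacteristic_coe (fun q => hux q.1 q.2) hsol t x

/-- The fifth-order local symmetry of the Krichever-Novikov equation (quartic `f`):
its characteristic `P` satisfies the symmetry determining equation. -/
theorem KN_fifth_order_symmetry (C₁ C₂ C₃ C₄ C₅ : ℝ) (f : ℝ → ℝ)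
    (hf : ∀ v, f v = C₁ * v^4 + C₂ * v^3 + C₃ * v^2 + C₄ * v + C₅)
    (u : ℝ → ℝ → ℝ) (hu : ContDiff ℝ (⊤ : ℕ∞) (Function.uncurry u))
    (hux : ∀ t x, pdx u t x ≠ 0)
    (hsol : isGKN f u) :
    symmDet f u
      (fun t x =>
        (pdx (pdx (pdx (pdx (pdx u)))) t x) - 5 * (pdx (pdx (pdx (pdx u))) t x) * (pdx (pdx u) t x) / (pdx u t x) - (5/2) * (pdx (pdx (pdx u)) t x)^2 / (pdx u t x)
        + (25/2) * (pdx (pdx (pdx u)) t x) * (pdx (pdx u) t x)^2 / (pdx u t x)^2 - (45/8) * (pdx (pdx u) t x)^4 / (pdx u t x)^3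
        - (5/3) * (pdx (pdx (pdx u)) t x) * (f (u t x)) / (pdx u t x)^2 + (25/6) * (pdx (pdx u) t x)^2 * (f (u t x)) / (pdx u t x)^3
        - (5/3) * (pdx (pdx u) t x) * (deriv f (u t x)) / (pdx u t x) - (5/18) * (f (u t x))^2 / (pdx u t x)^3
        + (5/9) * (pdx u t x) * (deriv (deriv f) (u t x))) := by
  let p : ℝ[X] := .C C₁ * .X ^ 4 + .C C₂ * .X ^ 3 + .C C₃ * .X ^ 2 + .C C₄ * .X + .C C₅
  obtain rfl : f = fun v => p.eval v := funext fun v => by simp [p, hf]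
  have hp : p.natDegree < 5 := Nat.lt_succ_of_le (by simp only [p]; compute_degree)
  have hsmooth : ContDiff ℝ ∞ fun v => p.eval v := p.contDiff_aeval ∞
  intro t x
  refine (KN_fifth_order_symmetry_general hsmooth hu hux hsol t x).trans ?_
  rw [iteratedDeriv_eval_eq_zero hp, Pi.zero_apply, mul_zero]
end
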